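/- arXiv:math/0212156 — 2 statements merged into one kernel-verified Lean document; each statement's English description precedes it below -/
import Mathlib

section
/- Let q ∈ ℕ, 1 ≤ j ≤ q and s > 1. Then for every K > 0, as r → ∞, ∑_{n ≥ j, n ≡ j (mod q)} n^{−s}·e^{−r/n} = Γ(s−1)/(q·r^{s−1}) + O(r^{−K}); that is, the error is superpolynomially small in r. -/
open scoped BigOperators

open MeasureTheory Filter Topology Set Asymptotics
open scoped FourierTransform ContDiff

/-!
With `u = n / r`, the summand is `r ^ (-s) * k s (n / r)`, where `k s u = u ^ (-s) * exp (-1 / u)`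
is extended by zero to `u ≤ 0`. The kernel `k s` is smooth on all of `ℝ`, with derivative
`-s * k (s + 1) + k (s + 2)`, so all its derivatives are integrable. Poisson summation over the
lattice `a + q ℤ` then produces the main term `(r / q) * ∫ k s` as its zeroth Fourier mode, and
integrating by parts `N` times bounds all other modes by `O(r ^ (1 - N))`. In passing from the
lattice to `n ≥ a`, the points `n ≤ 0` contribute nothing, and the finitely many `0 < n < a` each
contribute a superpolynomially small amount.
-/

theorem tsum_nat_eq_tsum_int_sub_sum {G : Type*} [AddCommGroup G] [UniformSpace G]
    [IsUniformAddGroup G] [CompleteSpace G] [T2Space G] {f : ℤ → G} (hf : Summable f) {M : ℕ}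
    (hzero : ∀ m : ℕ, M ≤ m → f (-(m + 1)) = 0) :
    ∑' m : ℕ, f m = ∑' n : ℤ, f n - ∑ m ∈ Finset.range M, f (-(m + 1)) := by
  have hneg : Summable fun m : ℕ => f (-(m + 1)) :=
    hf.comp_injective fun m n h => by simpa using h
  rw [tsum_of_nat_of_neg_add_one (hf.comp_injective Nat.cast_injective) hneg,
    tsum_eq_sum (s := Finset.range M) fun m hm => hzero m (by simpa using hm)]
  exact (add_sub_cancel_right _ _).symm

theorem superpolynomialDecay_sum {ι α β : Type*} [TopologicalSpace β] [CommSemiring β]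
    [ContinuousAdd β] {l : Filter α} {k : α → β} {t : Finset ι} {f : ι → α → β}
    (hf : ∀ i ∈ t, SuperpolynomialDecay l k (f i)) :
    SuperpolynomialDecay l k fun x => ∑ i ∈ t, f i x := fun n => by
  simpa only [Finset.mul_sum, Finset.sum_const_zero] using tendsto_finsetSum t fun i hi => hf i hi n

theorem exists_abs_le_div_pow_of_superpolynomialDecay {f : ℝ → ℝ}
    (hf : SuperpolynomialDecay atTop id f) (K : ℕ) :
    ∃ C r₀ : ℝ, ∀ r, r₀ ≤ r → |f r| ≤ C / r ^ K := by
  have hbounded : ∀ᶠ r : ℝ in atTop, |r ^ K * f r| ≤ 1 := by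
    simpa using (hf K).abs.eventually_le_const (by simp : |(0 : ℝ)| < 1)
  obtain ⟨r₀, hr₀⟩ := eventually_atTop.mp (hbounded.and (eventually_gt_atTop 0))
  refine ⟨1, r₀, fun r hr => ?_⟩
  obtain ⟨hle, hr0⟩ := hr₀ r hr
  rwa [le_div_iff₀' (pow_pos hr0 K), ← abs_of_pos (pow_pos hr0 K), ← abs_mul]

theorem pow_mul_norm_fourier_le {E : Type*} [NormedAddCommGroup E] [NormedSpace ℂ E]
    {f : ℝ → E} {N : ℕ} (hf : ContDiff ℝ N f)
    (hf_int : ∀ n ≤ N, Integrable (iteratedDeriv n f)) (t : ℝ) :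
    (2 * Real.pi * |t|) ^ N * ‖𝓕 f t‖ ≤ ∫ x, ‖iteratedDeriv N f x‖ := by
  have h := congrFun (Real.fourier_iteratedDeriv (N := N) hf
    (fun n hn => hf_int n (by exact_mod_cast hn)) le_rfl) t
  calc (2 * Real.pi * |t|) ^ N * ‖𝓕 f t‖ = ‖𝓕 (iteratedDeriv N f) t‖ := by
        rw [h, norm_smul]; simp [abs_of_pos Real.pi_pos]
    _ ≤ _ := VectorFourier.norm_fourierIntegral_le_integral_norm _ _ _ _ _

theorem summable_one_div_two_pi_mul_abs_int_pow {N : ℕ} (hN : 2 ≤ N) :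
    Summable fun n : ℤ => 1 / (2 * Real.pi * |(n : ℝ)|) ^ N := by
  have h := (Real.summable_one_div_int_pow (p := N)).mpr (by omega)
  simpa only [mul_pow, one_div_mul_one_div, abs_div, abs_one, abs_pow] using
    h.abs.mul_left (1 / (2 * Real.pi) ^ N)

theorem norm_tsum_add_int_sub_integral_le {f : ℝ → ℂ} {N : ℕ} {b : ℝ} (hN : 2 ≤ N)
    (hf : ContDiff ℝ N f) (hf_int : ∀ n ≤ N, Integrable (iteratedDeriv n f)) (hb : 1 < b)
    (hf_decay : f =O[cocompact ℝ] fun x => |x| ^ (-b)) (x : ℝ) :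
    ‖∑' n : ℤ, f (x + n) - ∫ y, f y‖ ≤
      (∑' n : ℤ, 1 / (2 * Real.pi * |(n : ℝ)|) ^ N) * ∫ y, ‖iteratedDeriv N f y‖ := by
  set I := ∫ y, ‖iteratedDeriv N f y‖
  have hbound_summable := (summable_one_div_two_pi_mul_abs_int_pow hN).mul_right I
  have hbound : ∀ n : ℤ, n ≠ 0 → ‖𝓕 f n‖ ≤ 1 / (2 * Real.pi * |(n : ℝ)|) ^ N * I := by
    intro n hn
    rw [one_div, ← div_eq_inv_mul, le_div_iff₀' (by positivity)]
    exact pow_mul_norm_fourier_le hf hf_int n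
  have hsummable : Summable fun n : ℤ => 𝓕 f n :=
    hbound_summable.of_norm_bounded_eventually <| by
      filter_upwards [(finite_singleton (0 : ℤ)).compl_mem_cofinite] with n hn using hbound n hn
  have hsummable' : Summable fun n : ℤ => 𝓕 f n * fourier n (x : UnitAddCircle) :=
    .of_norm <| hsummable.norm.congr fun n => by
      rw [norm_mul, fourier_apply, Circle.norm_coe, mul_one]
  have hzero : 𝓕 f ((0 : ℤ) : ℝ) * fourier 0 (x : UnitAddCircle) = ∫ y, f y := by
    simp [Real.fourier_real_eq_integral_exp_smul]
  rw [Real.tsum_eq_tsum_fourier_of_rpow_decay_of_summable hf.continuous hb hf_decay hsummable,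
    hsummable'.tsum_eq_add_tsum_ite 0, hzero, add_sub_cancel_left, ← tsum_mul_right]
  refine tsum_of_norm_bounded hbound_summable.hasSum fun n => ?_
  split_ifs with hn
  · rw [norm_zero]; positivity
  · rw [norm_mul, fourier_apply, Circle.norm_coe, mul_one]
    exact hbound n hn

theorem iteratedDeriv_ofReal_comp {f : ℝ → ℝ} {n : ℕ} (hf : ContDiff ℝ n f) :
    iteratedDeriv n (fun x => (f x : ℂ)) = fun x => ((iteratedDeriv n f x : ℝ) : ℂ) := by
  ext x
  have h := Complex.ofRealCLM.iteratedFDeriv_comp_left (x := x) hf.contDiffAt (i := n) le_rfl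
  exact congrArg (fun A => A fun _ => 1) h

theorem abs_tsum_add_int_sub_integral_le {f : ℝ → ℝ} {N : ℕ} {b : ℝ} (hN : 2 ≤ N)
    (hf : ContDiff ℝ N f) (hf_int : ∀ n ≤ N, Integrable (iteratedDeriv n f)) (hb : 1 < b)
    (hf_decay : f =O[cocompact ℝ] fun x => |x| ^ (-b)) (x : ℝ) :
    |∑' n : ℤ, f (x + n) - ∫ y, f y| ≤
      (∑' n : ℤ, 1 / (2 * Real.pi * |(n : ℝ)|) ^ N) * ∫ y, |iteratedDeriv N f y| := by
  have hderiv : ∀ n ≤ N,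
      iteratedDeriv n (fun y => (f y : ℂ)) = fun y => ((iteratedDeriv n f y : ℝ) : ℂ) :=
    fun n hn => iteratedDeriv_ofReal_comp (hf.of_le (by exact_mod_cast hn))
  have h := norm_tsum_add_int_sub_integral_le (f := fun y => (f y : ℂ)) hN
    (Complex.ofRealCLM.contDiff.comp hf)
    (fun n hn => by rw [hderiv n hn]; exact (hf_int n hn).ofReal) hb
    (hf_decay.norm_left.congr_left fun y => (Complex.norm_real _).symm).of_norm_left x
  simp only [hderiv N le_rfl, Complex.norm_real, Real.norm_eq_abs] at h
  rwa [← Complex.ofReal_tsum, integral_complex_ofReal, ← Complex.ofReal_sub, Complex.norm_real,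
    Real.norm_eq_abs] at h

theorem abs_tsum_comp_mul_sub_integral_le {f : ℝ → ℝ} {N : ℕ} {b c : ℝ} (hN : 1 ≤ N)
    (hf : ContDiff ℝ (N + 1 : ℕ) f) (hf_int : ∀ n ≤ N + 1, Integrable (iteratedDeriv n f))
    (hb : 1 < b) (hf_decay : f =O[cocompact ℝ] fun x => |x| ^ (-b)) (hc : 0 < c) (x : ℝ) :
    |∑' n : ℤ, f (c * (x + n)) - c⁻¹ * ∫ y, f y| ≤
      (∑' n : ℤ, 1 / (2 * Real.pi * |(n : ℝ)|) ^ (N + 1)) *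
        (c ^ N * ∫ y, |iteratedDeriv (N + 1) f y|) := by
  have hderiv : ∀ n ≤ N + 1,
      iteratedDeriv n (fun y => f (c * y)) = fun y => c ^ n * iteratedDeriv n f (c * y) :=
    fun n hn => iteratedDeriv_comp_const_mul (hf.of_le (by exact_mod_cast hn)) c
  have hdecay : (fun y => f (c * y)) =O[cocompact ℝ] fun y => |y| ^ (-b) := by
    refine (hf_decay.comp_tendsto
      (Homeomorph.mulLeft₀ c hc.ne').isClosedEmbedding.tendsto_cocompact).trans ?_
    refine ((isBigO_refl _ _).const_mul_left (|c| ^ (-b))).congr_left fun y => ?_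
    simp [abs_mul, Real.mul_rpow (abs_nonneg c) (abs_nonneg y)]
  have hL1 : ∫ y, |iteratedDeriv (N + 1) (fun y => f (c * y)) y| =
      c ^ N * ∫ y, |iteratedDeriv (N + 1) f y| := by
    simp_rw [hderiv (N + 1) le_rfl, abs_mul, abs_of_pos (pow_pos hc (N + 1)), integral_const_mul]
    rw [Measure.integral_comp_mul_left (fun y => |iteratedDeriv (N + 1) f y|),
      abs_of_pos (inv_pos.mpr hc), smul_eq_mul, pow_succ, mul_assoc, mul_inv_cancel_left₀ hc.ne']
  have h := abs_tsum_add_int_sub_integral_le (Nat.succ_le_succ hN)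
    (hf.comp (contDiff_const.mul contDiff_id))
    (fun n hn => by
      simpa only [Function.comp_def, id, hderiv n hn] using
        ((hf_int n hn).comp_mul_left' hc.ne').const_mul (c ^ n)) hb hdecay x
  rw [← hL1, ← abs_of_pos (inv_pos.mpr hc), ← smul_eq_mul, ← Measure.integral_comp_mul_left]
  exact h

theorem superpolynomialDecay_tsum_sub_integral {f : ℝ → ℝ} {b q : ℝ} (hf : ContDiff ℝ ∞ f)
    (hf_int : ∀ n, Integrable (iteratedDeriv n f)) (hb : 1 < b)
    (hf_decay : f =O[cocompact ℝ] fun x => |x| ^ (-b)) (hq : 0 < q) (a : ℝ) :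
    SuperpolynomialDecay atTop id
      fun r : ℝ => ∑' n : ℤ, f ((a + q * n) / r) - r / q * ∫ y, f y := by
  intro N
  set C := (∑' n : ℤ, 1 / (2 * Real.pi * |(n : ℝ)|) ^ (N + 1 + 1)) *
    (q ^ (N + 1) * ∫ y, |iteratedDeriv (N + 1 + 1) f y|) with hC
  have herror : ∀ r : ℝ, 0 < r →
      |∑' n : ℤ, f ((a + q * n) / r) - r / q * ∫ y, f y| ≤ C / r ^ (N + 1) := by
    intro r hr
    have h := abs_tsum_comp_mul_sub_integral_le (Nat.le_add_left 1 N)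
      (contDiff_infty.mp hf (N + 1 + 1)) (fun n _ => hf_int n) hb hf_decay (div_pos hq hr) (a / q)
    have hpoint : ∀ n : ℤ, q / r * (a / q + n) = (a + q * n) / r := fun n => by field_simp
    simp only [hpoint, inv_div] at h
    exact h.trans_eq (by rw [hC, div_pow]; ring)
  have hlim : Tendsto (fun r : ℝ => C / r) atTop (𝓝 0) := tendsto_const_nhds.div_atTop tendsto_id
  refine squeeze_zero_norm' ?_ hlim
  filter_upwards [eventually_gt_atTop 0] with r hr
  calc _ = r ^ N * |∑' n : ℤ, f ((a + q * n) / r) - r / q * ∫ y, f y| := by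
        rw [id, Real.norm_eq_abs, abs_mul, abs_of_pos (pow_pos hr N)]
    _ ≤ r ^ N * (C / r ^ (N + 1)) := by gcongr; exact herror r hr
    _ = C / r := by rw [pow_succ]; field_simp

/-- The kernel `u ^ (-s) * exp (-1 / u)`, extended by zero to `u ≤ 0`: the unnormalized density of
the inverse gamma distribution of shape `s - 1`. The junk values of `u ^ (-s)` for `u ≤ 0` are
killed by the factor `expNegInvGlue u = 0`. -/
noncomputable def invGammaKernel (s u : ℝ) : ℝ := u ^ (-s) * expNegInvGlue u

namespace invGammaKernel

variable {s u : ℝ}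

theorem eq_of_pos (hu : 0 < u) : invGammaKernel s u = u ^ (-s) * Real.exp (-u⁻¹) := by
  rw [invGammaKernel, expNegInvGlue, if_neg hu.not_ge]

theorem eq_zero_of_nonpos (hu : u ≤ 0) : invGammaKernel s u = 0 := by
  rw [invGammaKernel, expNegInvGlue.zero_of_nonpos hu, mul_zero]

theorem eq_mul_add_one : invGammaKernel s u = u * invGammaKernel (s + 1) u := by
  rcases le_or_gt u 0 with hu | hu
  · rw [eq_zero_of_nonpos hu, eq_zero_of_nonpos hu, mul_zero]
  · rw [invGammaKernel, invGammaKernel, show -s = -(s + 1) + 1 by ring, Real.rpow_add_one hu.ne']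
    ring

theorem abs_le_abs_rpow (s u : ℝ) : |invGammaKernel s u| ≤ |u| ^ (-s) := by
  rcases le_or_gt u 0 with hu | hu
  · rw [eq_zero_of_nonpos hu, abs_zero]; positivity
  · rw [eq_of_pos hu, abs_of_pos hu, abs_of_pos (by positivity)]
    exact mul_le_of_le_one_right (by positivity) (Real.exp_le_one_iff.mpr (by simpa using hu.le))

theorem tendsto_nhds_zero (s : ℝ) : Tendsto (invGammaKernel s) (𝓝 0) (𝓝 0) := by
  suffices h : Tendsto (invGammaKernel s) (𝓝[≤] 0 ⊔ 𝓝[>] 0) (𝓝 0) by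
    rwa [nhdsLE_sup_nhdsGT] at h
  refine tendsto_sup.mpr ⟨?_, ?_⟩
  · refine tendsto_const_nhds.congr' ?_
    filter_upwards [self_mem_nhdsWithin] with u hu using (eq_zero_of_nonpos hu).symm
  · refine ((tendsto_rpow_mul_exp_neg_mul_atTop_nhds_zero s 1 one_pos).comp
      tendsto_inv_nhdsGT_zero).congr' ?_
    filter_upwards [self_mem_nhdsWithin] with u hu
    have hu : 0 < u := hu
    simp [eq_of_pos hu, Real.rpow_neg hu.le, Real.inv_rpow hu.le]

theorem hasDerivAt (s u : ℝ) :
    HasDerivAt (invGammaKernel s)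
      (-s * invGammaKernel (s + 1) u + invGammaKernel (s + 2) u) u := by
  rcases lt_trichotomy u 0 with hu | rfl | hu
  · have hzero : invGammaKernel s =ᶠ[𝓝 u] fun _ => 0 := by
      filter_upwards [eventually_lt_nhds hu] with v hv using eq_zero_of_nonpos hv.le
    simpa [eq_zero_of_nonpos hu.le] using (hasDerivAt_const u (0 : ℝ)).congr_of_eventuallyEq hzero
  · simp only [eq_zero_of_nonpos le_rfl, mul_zero, add_zero, hasDerivAt_iff_tendsto_slope_zero]
    refine ((tendsto_nhds_zero (s + 1)).mono_left nhdsWithin_le_nhds).congr' ?_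
    filter_upwards [self_mem_nhdsWithin] with v hv
    rw [zero_add, sub_zero, smul_eq_mul, eq_mul_add_one (s := s), inv_mul_cancel_left₀ hv]
  · have hformula : invGammaKernel s =ᶠ[𝓝 u] fun v => v ^ (-s) * Real.exp (-v⁻¹) := by
      filter_upwards [eventually_gt_nhds hu] with v hv using eq_of_pos hv
    have hpow := Real.hasDerivAt_rpow_const (p := -s) (Or.inl hu.ne')
    have hexp : HasDerivAt (fun v : ℝ => Real.exp (-v⁻¹)) (Real.exp (-u⁻¹) * (u ^ 2)⁻¹) u := by
      simpa only [neg_neg] using (hasDerivAt_inv hu.ne').fun_neg.exp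
    refine ((hpow.mul hexp).congr_of_eventuallyEq hformula).congr_deriv ?_
    rw [eq_of_pos hu, eq_of_pos hu, show -(s + 2) = -s - (2 : ℕ) by push_cast; ring,
      Real.rpow_sub_natCast hu.ne', neg_add']
    field_simp

theorem deriv_eq (s : ℝ) :
    deriv (invGammaKernel s) =
      fun u => -s * invGammaKernel (s + 1) u + invGammaKernel (s + 2) u :=
  funext fun u => (hasDerivAt s u).deriv

theorem contDiff (s : ℝ) : ContDiff ℝ ∞ (invGammaKernel s) := by
  refine contDiff_infty.mpr fun n => ?_
  induction n generalizing s with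
  | zero =>
    exact contDiff_zero.mpr <| continuous_iff_continuousAt.mpr fun u =>
      (hasDerivAt s u).continuousAt
  | succ n ih =>
    rw [Nat.cast_succ, contDiff_succ_iff_deriv, deriv_eq]
    exact ⟨fun u => (hasDerivAt s u).differentiableAt, by simp,
      (contDiff_const.mul (ih (s + 1))).add (ih (s + 2))⟩

/-- The substitution `t = u⁻¹` turns the Gamma integrand into the kernel; the left-hand side has the
shape of `integral_comp_rpow_Ioi` with exponent `-1`. -/
theorem eqOn_comp_inv (s : ℝ) :
    EqOn (fun u : ℝ => (|(-1 : ℝ)| * u ^ ((-1 : ℝ) - 1)) •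
      (fun t => Real.exp (-t) * t ^ (s - 1 - 1)) (u ^ (-1 : ℝ))) (invGammaKernel s) (Ioi 0) := by
  intro u hu
  have hu : 0 < u := hu
  have hpow : u ^ ((-1 : ℝ) - 1) * u ^ (-1 * (s - 1 - 1)) = u ^ (-s) := by
    rw [← Real.rpow_add hu]; ring_nf
  simp only [smul_eq_mul, abs_neg, abs_one, one_mul]
  rw [eq_of_pos hu, ← hpow, ← Real.rpow_mul hu.le, Real.rpow_neg_one]
  ring

theorem indicator_Ioi (s : ℝ) : (Ioi 0).indicator (invGammaKernel s) = invGammaKernel s :=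
  indicator_eq_self.mpr fun _ hu => not_le.mp fun hle => hu (eq_zero_of_nonpos hle)

theorem integrable (hs : 1 < s) : Integrable (invGammaKernel s) := by
  rw [← indicator_Ioi, integrable_indicator_iff measurableSet_Ioi]
  exact ((integrableOn_Ioi_comp_rpow_iff _ (by norm_num)).mpr
    (Real.GammaIntegral_convergent (sub_pos.mpr hs))).congr_fun (eqOn_comp_inv s) measurableSet_Ioi

theorem integral_eq (hs : 1 < s) : ∫ u, invGammaKernel s u = Real.Gamma (s - 1) := by
  rw [← indicator_Ioi, integral_indicator measurableSet_Ioi,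
    ← setIntegral_congr_fun measurableSet_Ioi (eqOn_comp_inv s),
    integral_comp_rpow_Ioi (fun t => Real.exp (-t) * t ^ (s - 1 - 1)) (by norm_num),
    Real.Gamma_eq_integral (sub_pos.mpr hs)]

theorem integrable_iteratedDeriv (hs : 1 < s) (n : ℕ) :
    Integrable (iteratedDeriv n (invGammaKernel s)) := by
  induction n generalizing s with
  | zero => simpa only [iteratedDeriv_zero] using integrable hs
  | succ n ih =>
    have hsmooth (σ : ℝ) (u : ℝ) : ContDiffAt ℝ n (invGammaKernel σ) u :=
      (contDiff_infty.mp (contDiff σ) n).contDiffAt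
    have hstep : iteratedDeriv (n + 1) (invGammaKernel s) = fun u =>
        -s * iteratedDeriv n (invGammaKernel (s + 1)) u +
          iteratedDeriv n (invGammaKernel (s + 2)) u := by
      ext u
      rw [iteratedDeriv_succ', deriv_eq,
        iteratedDeriv_fun_add (contDiffAt_const.mul (hsmooth _ u)) (hsmooth _ u),
        iteratedDeriv_const_mul_field]
    rw [hstep]
    exact ((ih (by linarith)).const_mul (-s)).add (ih (by linarith))

theorem isBigO_cocompact (s : ℝ) : invGammaKernel s =O[cocompact ℝ] fun u => |u| ^ (-s) :=
  isBigO_of_le _ fun u => by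
    simpa only [Real.norm_eq_abs, abs_of_nonneg (Real.rpow_nonneg (abs_nonneg u) _)]
      using abs_le_abs_rpow s u

theorem superpolynomialDecay_div (s y : ℝ) :
    SuperpolynomialDecay atTop id fun r : ℝ => invGammaKernel s (y / r) := by
  intro n
  rcases le_or_gt y 0 with hy | hy
  · refine tendsto_const_nhds.congr' ?_
    filter_upwards [eventually_ge_atTop 0] with r hr
    rw [eq_zero_of_nonpos (div_nonpos_of_nonpos_of_nonneg hy hr), mul_zero]
  · have h := (tendsto_rpow_mul_exp_neg_mul_atTop_nhds_zero (n + s) y⁻¹ (inv_pos.mpr hy)).const_mul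
      (y ^ (-s))
    rw [mul_zero] at h
    refine h.congr' ?_
    filter_upwards [eventually_gt_atTop 0] with r hr
    rw [eq_of_pos (div_pos hy hr), Real.div_rpow hy.le hr.le, Real.rpow_add hr, Real.rpow_natCast,
      Real.rpow_neg hr.le, id, inv_div, neg_mul, inv_mul_eq_div]
    field_simp

theorem summable_comp_int (hs : 1 < s) {q : ℝ} (hq : 0 < q) (a : ℝ) {r : ℝ} (hr : 0 < r) :
    Summable fun n : ℤ => invGammaKernel s ((a + q * n) / r) := by
  refine (((Real.summable_one_div_int_add_rpow (a / q) s).mpr hs).mul_left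
    ((q / r) ^ (-s))).of_norm_bounded fun n => ?_
  have hpoint : (a + q * n) / r = q / r * (n + a / q) := by field_simp; ring
  calc _ ≤ |(a + q * n) / r| ^ (-s) := abs_le_abs_rpow _ _
    _ = _ := by
      rw [hpoint, abs_mul, abs_of_pos (div_pos hq hr), Real.mul_rpow (by positivity) (abs_nonneg _),
        Real.rpow_neg (abs_nonneg _), one_div]

theorem rpow_mul_div {y r : ℝ} (hy : 0 < y) (hr : 0 < r) :
    r ^ (-s) * invGammaKernel s (y / r) = y ^ (-s) * Real.exp (-r / y) := by
  rw [eq_of_pos (div_pos hy hr), Real.div_rpow hy.le hr.le, inv_div, neg_div]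
  field_simp

end invGammaKernel

theorem invGammaKernel.superpolynomialDecay_tsum_nat_sub {s a q : ℝ} (hs : 1 < s) (hq : 0 < q) :
    SuperpolynomialDecay atTop id fun r : ℝ =>
      ∑' m : ℕ, invGammaKernel s ((a + q * m) / r) - r / q * Real.Gamma (s - 1) := by
  obtain ⟨M, hM⟩ := exists_nat_ge (a / q)
  have hlattice := superpolynomialDecay_tsum_sub_integral (contDiff s)
    (integrable_iteratedDeriv hs) hs (isBigO_cocompact s) hq a
  have hfinite := superpolynomialDecay_sum (t := Finset.range M) fun m _ =>
    superpolynomialDecay_div s (a + q * (-(m + 1) : ℤ))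
  refine (hlattice.add (hfinite.const_mul (-1))).congr' ?_
  filter_upwards [eventually_gt_atTop 0] with r hr
  have hsplit := tsum_nat_eq_tsum_int_sub_sum (summable_comp_int hs hq a hr) (M := M) fun m hm => by
    refine eq_zero_of_nonpos (div_nonpos_of_nonpos_of_nonneg ?_ hr.le)
    have haM : a ≤ M * q := (div_le_iff₀ hq).mp hM
    have hMm : (M : ℝ) ≤ m := by exact_mod_cast hm
    push_cast
    nlinarith
  simp only [Pi.add_apply, integral_eq hs]
  simp only [Int.cast_natCast] at hsplit
  rw [hsplit]
  ring

theorem sum_exp_superpolynomial_general {s a q : ℝ} (hs : 1 < s) (ha : 0 < a) (hq : 0 < q) :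
    SuperpolynomialDecay atTop id fun r : ℝ =>
      ∑' m : ℕ, (a + q * m) ^ (-s) * Real.exp (-r / (a + q * m)) -
        Real.Gamma (s - 1) / (q * r ^ (s - 1)) := by
  refine (invGammaKernel.superpolynomialDecay_tsum_nat_sub (a := a) hs hq).trans_eventually_abs_le
    ?_
  filter_upwards [eventually_ge_atTop 1] with r hr
  have hr0 : 0 < r := by linarith
  have hterm : ∀ m : ℕ, (a + q * m) ^ (-s) * Real.exp (-r / (a + q * m)) =
      r ^ (-s) * invGammaKernel s ((a + q * m) / r) := fun m =>
    (invGammaKernel.rpow_mul_div (by positivity) hr0).symm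
  have hmain : Real.Gamma (s - 1) / (q * r ^ (s - 1)) =
      r ^ (-s) * (r / q * Real.Gamma (s - 1)) := by
    rw [Real.rpow_sub_one hr0.ne', Real.rpow_neg hr0.le]
    field_simp
  simp only [Function.comp_apply, hterm, hmain]
  rw [tsum_mul_left, ← mul_sub, abs_mul, abs_of_pos (by positivity)]
  exact mul_le_of_le_one_left (abs_nonneg _) (Real.rpow_le_one_of_one_le_of_nonpos hr (by linarith))

/-- **Superpolynomial summation estimate** (Lemma 4, case `s > 1`).  For `1 ≤ j ≤ q` and
`s > 1`, the sum over `n ≡ j (mod q)`, `n ≥ j` (i.e. `n = j + q·m`) satisfies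
`∑ n^{-s} e^{-r/n} = Γ(s-1)/(q·r^{s-1}) + O(r^{-K})` for every `K > 0` as `r → ∞`. -/
theorem sum_exp_superpolynomial (q j : ℕ) (hj : 1 ≤ j) (hjq : j ≤ q)
    (s : ℝ) (hs : 1 < s) (K : ℕ) (hK : 0 < K) :
    ∃ C r₀ : ℝ, ∀ r : ℝ, r₀ ≤ r →
      |(∑' m : ℕ, ((j + q * m : ℕ) : ℝ) ^ (-s) * Real.exp (-r / ((j + q * m : ℕ) : ℝ))) -
          Real.Gamma (s - 1) / ((q : ℝ) * r ^ (s - 1))| ≤ C / r ^ K := by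
  simpa using exists_abs_le_div_pow_of_superpolynomialDecay (sum_exp_superpolynomial_general hs
    (Nat.cast_pos.mpr hj) (Nat.cast_pos.mpr (hj.trans hjq))) K
end

section
/- Let a be the harmonic potential of the simple random walk on ℤ² ⊂ ℂ. Then for every integer m ≥ 0, a(m + i·m) = (4/π)·∑_{j=1}^{m} 1/(2j − 1) = (4/π)·(1 + 1/3 + 1/5 + ⋯ + 1/(2m−1)) (with the empty sum equal to 0 for m = 0). -/
open scoped BigOperators Classical

noncomputable section

/-- `srwP n z` is the probability that the simple random walk on `ℤ² = ℤ + iℤ ⊂ ℂ`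
(i.i.d. steps uniform on `{1, -1, i, -i}`), started at `0`, is at `z` after `n` steps. -/
def srwP : ℕ → ℂ → ℝ
  | 0 => fun z => if z = 0 then 1 else 0
  | n + 1 => fun z =>
      (srwP n (z - 1) + srwP n (z + 1) + srwP n (z - Complex.I) + srwP n (z + Complex.I)) / 4

/-- The harmonic potential `a(z) = ∑ₙ (Pₙ(0) - Pₙ(z))` of the simple random walk on
`ℤ² ⊂ ℂ`. -/
def srwPot (z : ℂ) : ℝ :=
  ∑' n : ℕ, (srwP n 0 - srwP n z)

/-- Membership in the lattice `ℤ² = ℤ + iℤ ⊂ ℂ` of Gaussian integers. -/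
def IsGaussianInt (z : ℂ) : Prop :=
  ∃ a b : ℤ, z = (a : ℂ) + (b : ℂ) * Complex.I

/-!
In the coordinates `x + y`, `x - y` the planar walk is a pair of independent walks on `ℤ`, so with
`p` the transition probabilities of the walk on `ℤ` we have `P_n(m + im) = p_n(0) p_n(2m)`.
Exchangeability of the steps gives first-order recurrences for `p`, and these make
`(u + 1) p_n(0) (p_n(u) - p_n(u + 2))` the increment from `n` to `n + 2` of
`2 (n - u) p_n(0) p_n(u)`. Hence `a((m + 1)(1 + i)) - a(m(1 + i))` is `1 / (2m + 1)` times the limit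
of `4 (N - m) p_{2N}(0) p_{2N}(2m)`, which is `4 / π` by Wallis' product.
-/

open Filter Topology

/-- The probability that the simple random walk on `ℤ`, with steps uniform on `{1, -1}` and started
at `0`, is at `u` after `n` steps. -/
def lineWalkProb : ℕ → ℤ → ℝ
  | 0, u => if u = 0 then 1 else 0
  | n + 1, u => (lineWalkProb n (u - 1) + lineWalkProb n (u + 1)) / 2

lemma lineWalkProb_succ (n : ℕ) (u : ℤ) :
    lineWalkProb (n + 1) u = (lineWalkProb n (u - 1) + lineWalkProb n (u + 1)) / 2 :=
  rfl

lemma srwP_eq_lineWalkProb_mul (n : ℕ) (x y : ℤ) :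
    srwP n (x + y * Complex.I) = lineWalkProb n (x + y) * lineWalkProb n (x - y) := by
  induction n generalizing x y with
  | zero =>
    have origin_iff : (x : ℂ) + y * Complex.I = 0 ↔ x + y = 0 ∧ x - y = 0 := by
      have : (x : ℂ) + y * Complex.I = 0 ↔ x = 0 ∧ y = 0 := by simp [Complex.ext_iff]
      rw [this]
      omega
    simp only [srwP, lineWalkProb, origin_iff, ite_and, ite_mul, one_mul, zero_mul]
  | succ n ih =>
    have east : (x : ℂ) + y * Complex.I + 1 = (x + 1 : ℤ) + y * Complex.I := by push_cast; ring
    have west : (x : ℂ) + y * Complex.I - 1 = (x - 1 : ℤ) + y * Complex.I := by push_cast; ring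
    have north : (x : ℂ) + y * Complex.I + Complex.I = x + (y + 1 : ℤ) * Complex.I := by
      push_cast; ring
    have south : (x : ℂ) + y * Complex.I - Complex.I = x + (y - 1 : ℤ) * Complex.I := by
      push_cast; ring
    simp only [srwP, lineWalkProb, east, west, north, south, ih]
    ring_nf

lemma srwP_diagonal (n : ℕ) (m : ℤ) :
    srwP n (m + m * Complex.I) = lineWalkProb n 0 * lineWalkProb n (2 * m) := by
  rw [srwP_eq_lineWalkProb_mul, sub_self, ← two_mul, mul_comm]

lemma lineWalkProb_nonneg (n : ℕ) (u : ℤ) : 0 ≤ lineWalkProb n u := by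
  induction n generalizing u with
  | zero => simp only [lineWalkProb]; positivity
  | succ n ih => exact div_nonneg (add_nonneg (ih _) (ih _)) zero_le_two

lemma lineWalkProb_eq_zero_of_odd {n : ℕ} {u : ℤ} (h : Odd (n + u)) : lineWalkProb n u = 0 := by
  induction n generalizing u with
  | zero => exact if_neg fun hu ↦ by simp [hu] at h
  | succ n ih =>
    have down : lineWalkProb n (u - 1) = 0 := ih (by push_cast at h; grind)
    have up : lineWalkProb n (u + 1) = 0 := ih (by push_cast at h; grind)
    simp [lineWalkProb, down, up]

-- A path of `n + 1` steps ending at `u` has `(n + 1 + u) / 2` up-steps, and by exchangeability the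
-- last step is as likely to be one of them as any other.
lemma add_mul_lineWalkProb_succ (n : ℕ) (u : ℤ) :
    (n + 1 + u) * lineWalkProb (n + 1) u = (n + 1) * lineWalkProb n (u - 1) := by
  induction n generalizing u with
  | zero =>
    rcases eq_or_ne u 1 with rfl | hu
    · norm_num [lineWalkProb]
    rcases eq_or_ne u (-1) with rfl | hu'
    · norm_num [lineWalkProb]
    have down : u - 1 ≠ 0 := sub_ne_zero.2 hu
    have up : u + 1 ≠ 0 := mt eq_neg_of_add_eq_zero_left hu'
    simp [lineWalkProb, down, up]
  | succ n ih =>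
    have down := ih (u - 1)
    have up := ih (u + 1)
    have step_down := lineWalkProb_succ n (u - 1)
    rw [sub_add_cancel] at step_down
    rw [add_sub_cancel_right] at up
    push_cast at down up ⊢
    linear_combination (n + 2 + u : ℝ) * lineWalkProb_succ (n + 1) u + down / 2 + up / 2 -
      (n + 1 : ℝ) * step_down

lemma sub_mul_lineWalkProb_succ (n : ℕ) (u : ℤ) :
    (n + 1 - u) * lineWalkProb (n + 1) u = (n + 1) * lineWalkProb n (u + 1) := by
  linear_combination 2 * (n + 1 : ℝ) * lineWalkProb_succ n u - add_mul_lineWalkProb_succ n u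

lemma add_mul_lineWalkProb_add_two (n : ℕ) (u : ℤ) :
    (n + u + 2) * lineWalkProb n (u + 2) = (n - u) * lineWalkProb n u := by
  have from_below := add_mul_lineWalkProb_succ n (u + 1)
  have from_above := sub_mul_lineWalkProb_succ n (u + 1)
  rw [add_sub_cancel_right] at from_below
  rw [add_assoc u 1 1, one_add_one_eq_two] at from_above
  push_cast at from_below from_above
  refine mul_left_cancel₀ n.cast_add_one_ne_zero (?_ : ((n : ℝ) + 1) * _ = (n + 1) * _)
  linear_combination (n - u : ℝ) * from_below - (n + u + 2 : ℝ) * from_above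

lemma lineWalkProb_add_two_le (n : ℕ) {u : ℤ} (hu : -1 ≤ u) :
    lineWalkProb n (u + 2) ≤ lineWalkProb n u := by
  have hu' : (-1 : ℝ) ≤ u := by exact_mod_cast hu
  have hpos : (0 : ℝ) < n + u + 2 := by linarith [n.cast_nonneg (α := ℝ)]
  refine le_of_mul_le_mul_left ?_ hpos
  rw [add_mul_lineWalkProb_add_two]
  exact mul_le_mul_of_nonneg_right (by linarith) (lineWalkProb_nonneg n u)

lemma add_two_mul_lineWalkProb_zero (n : ℕ) :
    (n + 2) * lineWalkProb (n + 2) 0 = (n + 1) * lineWalkProb n 0 := by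
  have last := sub_mul_lineWalkProb_succ (n + 1) 0
  have first := add_mul_lineWalkProb_succ n 1
  rw [zero_add] at last
  rw [sub_self] at first
  push_cast at last first
  linear_combination last + first

lemma two_mul_add_two_sub_mul_lineWalkProb_add_two (n : ℕ) (u : ℤ) :
    2 * (n + 2 - u) * lineWalkProb (n + 2) u =
      (n + 2) * (lineWalkProb n u + lineWalkProb n (u + 2)) := by
  have last := sub_mul_lineWalkProb_succ (n + 1) u
  have first := lineWalkProb_succ n (u + 1)
  rw [add_sub_cancel_right, add_assoc u 1 1, one_add_one_eq_two] at first
  push_cast at last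
  linear_combination 2 * last + 2 * (n + 2 : ℝ) * first

lemma add_one_mul_lineWalkProb_zero_mul_sub (n : ℕ) (u : ℤ) :
    (u + 1) * (lineWalkProb n 0 * (lineWalkProb n u - lineWalkProb n (u + 2))) =
      2 * (n + 2 - u) * (lineWalkProb (n + 2) 0 * lineWalkProb (n + 2) u) -
        2 * (n - u) * (lineWalkProb n 0 * lineWalkProb n u) := by
  linear_combination -lineWalkProb (n + 2) 0 * two_mul_add_two_sub_mul_lineWalkProb_add_two n u -
    (lineWalkProb n u + lineWalkProb n (u + 2)) * add_two_mul_lineWalkProb_zero n -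
    lineWalkProb n 0 * add_mul_lineWalkProb_add_two n u

lemma add_one_mul_sum_lineWalkProb_zero_mul_sub (u : ℤ) (N : ℕ) :
    (u + 1) * ∑ k ∈ Finset.range N, lineWalkProb (2 * k) 0 *
        (lineWalkProb (2 * k) u - lineWalkProb (2 * k) (u + 2)) =
      2 * (2 * N - u) * (lineWalkProb (2 * N) 0 * lineWalkProb (2 * N) u) := by
  induction N with
  | zero => by_cases hu : u = 0 <;> simp [lineWalkProb, hu]
  | succ N ih =>
    have increment := add_one_mul_lineWalkProb_zero_mul_sub (2 * N) u
    rw [Finset.sum_range_succ, mul_add, ih, increment, mul_add_one]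
    push_cast
    ring

lemma wallis_mul_lineWalkProb_zero_sq (N : ℕ) :
    Real.Wallis.W N * ((2 * N + 1) * lineWalkProb (2 * N) 0 ^ 2) = 1 := by
  induction N with
  | zero => simp [lineWalkProb, Real.Wallis.W]
  | succ N ih =>
    have return_prob : lineWalkProb (2 * N + 2) 0 =
        (2 * N + 1) / (2 * N + 2) * lineWalkProb (2 * N) 0 := by
      have recurrence := add_two_mul_lineWalkProb_zero (2 * N)
      push_cast at recurrence
      field_simp
      linear_combination recurrence
    rw [Real.Wallis.W_succ, mul_add_one, return_prob]
    refine Eq.trans ?_ ih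
    push_cast
    field_simp
    ring

lemma tendsto_mul_lineWalkProb_zero_mul (m : ℕ) :
    Tendsto (fun N : ℕ ↦ (2 * N + 1) * (lineWalkProb (2 * N) 0 * lineWalkProb (2 * N) (2 * m)))
      atTop (𝓝 (2 / Real.pi)) := by
  induction m with
  | zero =>
    have wallis := Real.Wallis.tendsto_W_nhds_pi_div_two.inv₀ (by positivity)
    rw [inv_div] at wallis
    refine wallis.congr fun N ↦ inv_eq_of_mul_eq_one_right ?_
    simpa [sq] using wallis_mul_lineWalkProb_zero_sq N
  | succ m ih =>
    have ratio := tendsto_add_mul_div_add_mul_atTop_nhds (-m : ℝ) (m + 1) 1 one_ne_zero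
    have product := ih.mul ratio
    rw [div_one, mul_one] at product
    refine product.congr fun N ↦ ?_
    have recurrence := add_mul_lineWalkProb_add_two (2 * N) (2 * m)
    push_cast at recurrence ⊢
    rw [mul_add_one]
    field_simp
    linear_combination (-lineWalkProb (2 * N) 0 / 2) * recurrence

lemma hasSum_even_lineWalkProb_zero_mul_sub (m : ℕ) :
    HasSum (fun k ↦ lineWalkProb (2 * k) 0 *
        (lineWalkProb (2 * k) (2 * m) - lineWalkProb (2 * k) (2 * m + 2)))
      (4 / Real.pi * (1 / (2 * m + 1))) := by
  rw [hasSum_iff_tendsto_nat_of_nonneg fun k ↦ mul_nonneg (lineWalkProb_nonneg _ _)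
    (sub_nonneg.2 (lineWalkProb_add_two_le _ (by omega)))]
  have ratio := tendsto_add_mul_div_add_mul_atTop_nhds (-(4 * m) : ℝ) 1 4 two_ne_zero
  have product := ((tendsto_mul_lineWalkProb_zero_mul m).mul ratio).mul_const (1 / (2 * m + 1 : ℝ))
  rw [show 2 / Real.pi * (4 / 2) = 4 / Real.pi by ring] at product
  refine product.congr fun N ↦ ?_
  have partial_sum := add_one_mul_sum_lineWalkProb_zero_mul_sub (2 * m) N
  push_cast at partial_sum
  field_simp
  linear_combination (-(2 * N + 1 : ℝ)) * partial_sum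

lemma hasSum_lineWalkProb_zero_mul_sub (m : ℕ) :
    HasSum (fun n ↦ lineWalkProb n 0 * (lineWalkProb n (2 * m) - lineWalkProb n (2 * m + 2)))
      (4 / Real.pi * (1 / (2 * m + 1))) := by
  have odd (k : ℕ) : lineWalkProb (2 * k + 1) 0 = 0 :=
    lineWalkProb_eq_zero_of_odd ⟨k, by push_cast; ring⟩
  rw [← add_zero (4 / Real.pi * _)]
  refine (hasSum_even_lineWalkProb_zero_mul_sub m).even_add_odd ?_
  simpa only [odd, zero_mul] using hasSum_zero

lemma hasSum_srwP_zero_sub_diagonal (m : ℕ) :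
    HasSum (fun n ↦ srwP n 0 - srwP n (m + m * Complex.I))
      (4 / Real.pi * ∑ j ∈ Finset.range m, 1 / (2 * (j : ℝ) + 1)) := by
  induction m with
  | zero => simp
  | succ m ih =>
    rw [Finset.sum_range_succ, mul_add]
    refine (ih.add (hasSum_lineWalkProb_zero_mul_sub m)).congr_fun fun n ↦ ?_
    have here := srwP_diagonal n m
    have next := srwP_diagonal n (m + 1)
    rw [mul_add_one] at next
    push_cast at here next ⊢
    linear_combination here - next

/-- **The potential on the diagonal** (formula (7)).  For the simple random walk on
`ℤ² ⊂ ℂ`, `a(m + im) = (4/π)·(1 + 1/3 + 1/5 + ⋯ + 1/(2m-1))` for every `m ≥ 0`. -/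
theorem srwPot_diagonal (m : ℕ) :
    srwPot ((m : ℂ) + (m : ℂ) * Complex.I) =
      4 / Real.pi * ∑ j ∈ Finset.range m, 1 / (2 * (j : ℝ) + 1) :=
  (hasSum_srwP_zero_sub_diagonal m).tsum_eq
end
end
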